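/- arXiv:2402.16748 — 2 statements merged into one kernel-verified Lean document; each statement's English description precedes it below -/
import Mathlib

section
/- (Newton-like preconditioner is super-efficient.) With the Newton preconditioner P(x, y) := F_1(x, y), the preconditioned formula Ω^P(x, y) := Ω(x − F_1(x, y)^{−1}F(x, y), y) satisfies D_xΩ^P(x⋆(y), y) = 0 for every y ∈ ℝ^{d_y}; in particular ‖D_xΩ^P(x⋆(y), y)‖_op = 0. -/
noncomputable section

open ContinuousLinearMap RealInnerProductSpace

abbrev E (n : ℕ) : Type := EuclideanSpace ℝ (Fin n)

variable {dx dy : ℕ}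

/-- Partial Fréchet derivative in the first variable. -/
def pd1 {k : ℕ} (G : E dx × E dy → E k) (x : E dx) (y : E dy) : E dx →L[ℝ] E k :=
  fderiv ℝ (fun x' => G (x', y)) x

/-- Partial Fréchet derivative in the second variable. -/
def pd2 {k : ℕ} (G : E dx × E dy → E k) (x : E dx) (y : E dy) : E dy →L[ℝ] E k :=
  fderiv ℝ (fun y' => G (x, y')) y

/-- Partial gradient in the first variable. -/
def grad1 (g : E dx × E dy → ℝ) (x : E dx) (y : E dy) : E dx :=
  gradient (fun x' => g (x', y)) x

/-- Partial gradient in the second variable. -/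
def grad2 (g : E dx × E dy → ℝ) (x : E dx) (y : E dy) : E dy :=
  gradient (fun y' => g (x, y')) y

/-- Ψ(x, y) = −F₂(x,y)^⊤ ∘ (F₁(x,y)^⊤)⁻¹. -/
def Psi (F : E dx × E dy → E dx) (x : E dx) (y : E dy) : E dx →L[ℝ] E dy :=
  -((adjoint (pd2 F x y)).comp (Ring.inverse (adjoint (pd1 F x y))))

/-- The IFT formula Ω(x,y) = g₂(x,y) + Ψ(x,y) g₁(x,y). -/
def Omega (F : E dx × E dy → E dx) (g : E dx × E dy → ℝ) (x : E dx) (y : E dy) : E dy :=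
  grad2 g x y + Psi F x y (grad1 g x y)

/-- Newton-preconditioned formula Ωᴾ(x,y) = Ω(x − F₁(x,y)⁻¹ F(x,y), y). -/
def OmegaPNewton (F : E dx × E dy → E dx) (g : E dx × E dy → ℝ)
    (x : E dx) (y : E dy) : E dy :=
  Omega F g (x - Ring.inverse (pd1 F x y) (F (x, y))) y

/-!
At a zero of `f` the variation of `x ↦ f'(x)⁻¹` is multiplied by `f x = 0`, so the Newton step
`x ↦ x - f'(x)⁻¹ f(x)` has derivative `1 - f'(x)⁻¹ f'(x) = 0` there. By the chain rule, any formula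
differentiable at the root becomes stationary once it is evaluated at the Newton step.
-/

section NewtonStep

open scoped Topology

variable {𝕜 X Y Z : Type*} [NontriviallyNormedField 𝕜]
  [NormedAddCommGroup X] [NormedSpace 𝕜 X] [NormedAddCommGroup Y] [NormedSpace 𝕜 Y]
  [NormedAddCommGroup Z] [NormedSpace 𝕜 Z]

theorem hasFDerivAt_clm_apply_of_eq_zero {A : X → Y →L[𝕜] Z} {f : X → Y} {f' : X →L[𝕜] Y} {x₀ : X}
    (hA : ContinuousAt A x₀) (hf : HasFDerivAt f f' x₀) (hroot : f x₀ = 0) :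
    HasFDerivAt (fun x => A x (f x)) ((A x₀).comp f') x₀ := by
  have hA_sub : (fun x => ‖A x - A x₀‖) =o[𝓝 x₀] fun _ => (1 : ℝ) :=
    (Asymptotics.isLittleO_one_iff ℝ).2 (tendsto_iff_norm_sub_tendsto_zero.1 hA)
  have hf_bigO : f =O[𝓝 x₀] fun x => x - x₀ := by
    simpa only [hroot, sub_zero] using hf.isBigO_sub
  have hrem : (fun x => (A x - A x₀) (f x)) =o[𝓝 x₀] fun x => x - x₀ := by
    have hle : (fun x => (A x - A x₀) (f x)) =O[𝓝 x₀] fun x => ‖A x - A x₀‖ * ‖f x‖ :=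
      .of_norm_le fun x => (A x - A x₀).le_opNorm (f x)
    simpa only [one_mul, Asymptotics.isLittleO_norm_right] using
      hle.trans_isLittleO (hA_sub.mul_isBigO hf_bigO.norm_norm)
  have hrem_deriv : HasFDerivAt (fun x => (A x - A x₀) (f x)) (0 : X →L[𝕜] Z) x₀ :=
    .of_isLittleO <| by simpa [hroot] using hrem
  convert! ((A x₀).hasFDerivAt.comp x₀ hf).add hrem_deriv using 1
  · ext x
    simp
  · rw [add_zero]

variable (𝕜) in
/-- One step of Newton's method for the equation `f x = 0`. Where the derivative of `f` is not
invertible, `Ring.inverse` is `0` and the step stays at `x`. -/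
def newtonStep (f : X → X) (x : X) : X :=
  x - Ring.inverse (fderiv 𝕜 f x) (f x)

theorem hasFDerivAt_newtonStep_of_root [CompleteSpace X] {f : X → X} {x₀ : X}
    (hf' : ContinuousAt (fderiv 𝕜 f) x₀) (hinv : IsUnit (fderiv 𝕜 f x₀)) (hroot : f x₀ = 0) :
    HasFDerivAt (newtonStep 𝕜 f) (0 : X →L[𝕜] X) x₀ := by
  have hinverse : ContinuousAt (fun x => Ring.inverse (fderiv 𝕜 f x)) x₀ :=
    (differentiableAt_inverse (𝕜 := 𝕜) hinv).continuousAt.comp hf'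
  have hcancel : (Ring.inverse (fderiv 𝕜 f x₀)).comp (fderiv 𝕜 f x₀) = .id 𝕜 X :=
    Ring.inverse_mul_cancel _ hinv
  have hf : DifferentiableAt 𝕜 f x₀ :=
    differentiableAt_of_fderiv_injective
      (Function.LeftInverse.injective (DFunLike.congr_fun hcancel))
  refine ((hasFDerivAt_id x₀).sub
    (hasFDerivAt_clm_apply_of_eq_zero hinverse hf.hasFDerivAt hroot)).congr_fderiv ?_
  rw [hcancel, sub_self]

end NewtonStep

section PartialDerivatives

variable {𝕜 X Y Z : Type*} [NontriviallyNormedField 𝕜]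
  [NormedAddCommGroup X] [NormedSpace 𝕜 X] [NormedAddCommGroup Y] [NormedSpace 𝕜 Y]
  [NormedAddCommGroup Z] [NormedSpace 𝕜 Z] {G : X × Y → Z} {x₀ : X} {y : Y}

theorem differentiableAt_fderiv_fst (hG : ContDiffAt 𝕜 2 G (x₀, y)) :
    DifferentiableAt 𝕜 (fun x => fderiv 𝕜 (fun x' => G (x', y)) x) x₀ := by
  have hslice : ContDiffAt 𝕜 2 (fun x => G (x, y)) x₀ :=
    hG.comp x₀ (contDiff_prodMk_left y).contDiffAt
  exact (hslice.fderiv_right (m := 1) (by norm_num)).differentiableAt one_ne_zero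

theorem differentiableAt_fderiv_snd (hG : ContDiffAt 𝕜 2 G (x₀, y)) :
    DifferentiableAt 𝕜 (fun x => fderiv 𝕜 (fun y' => G (x, y')) y) x₀ :=
  (ContDiffAt.fderiv (f := fun x y' => G (x, y')) (m := 1) hG contDiffAt_const
    (by norm_num)).differentiableAt one_ne_zero

end PartialDerivatives

section ImplicitGradient

-- The adjoint and the Riesz map are typed as conjugate-linear even over `ℝ`, so the
-- differentiability lemmas for `ℝ`-linear maps do not apply to them directly.
theorem differentiable_of_map_add {V W : Type*} [NormedAddCommGroup V] [NormedSpace ℝ V]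
    [NormedAddCommGroup W] [NormedSpace ℝ W] {f : V → W} (hadd : ∀ v w, f (v + w) = f v + f w)
    (hf : Continuous f) : Differentiable ℝ f :=
  ((AddMonoidHom.mk' f hadd).toRealLinearMap hf).differentiable

variable {X Y : Type*}
  [NormedAddCommGroup X] [InnerProductSpace ℝ X] [CompleteSpace X]
  [NormedAddCommGroup Y] [InnerProductSpace ℝ Y] [CompleteSpace Y]

theorem differentiable_adjoint :
    Differentiable ℝ (adjoint : (X →L[ℝ] Y) → (Y →L[ℝ] X)) :=
  differentiable_of_map_add (map_add adjoint) adjoint.continuous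

theorem differentiable_toDual_symm :
    Differentiable ℝ (InnerProductSpace.toDual ℝ X).symm :=
  differentiable_of_map_add (map_add _) (InnerProductSpace.toDual ℝ X).symm.continuous

/-- The operator `Ψ(x, y) = -F₂(x, y)ᵀ (F₁(x, y)ᵀ)⁻¹`: at a zero of `F(·, y)`, the adjoint of the
derivative in `y` of the solution of `F(x, y) = 0` that the implicit function theorem provides. -/
def adjointSensitivity (F : X × Y → X) (x : X) (y : Y) : X →L[ℝ] Y :=
  -((adjoint (fderiv ℝ (fun y' => F (x, y')) y)).comp
    (Ring.inverse (adjoint (fderiv ℝ (fun x' => F (x', y)) x))))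

/-- The formula `Ω(x, y) = g₂(x, y) + Ψ(x, y) g₁(x, y)`: at a solution `x = x⋆(y)` of `F(x, y) = 0`,
the gradient of `y ↦ g(x⋆(y), y)`; elsewhere, an approximation of it. -/
def implicitGradient (F : X × Y → X) (g : X × Y → ℝ) (x : X) (y : Y) : Y :=
  gradient (fun y' => g (x, y')) y +
    adjointSensitivity F x y (gradient (fun x' => g (x', y)) x)

variable {F : X × Y → X} {g : X × Y → ℝ} {x₀ : X} {y : Y}

theorem differentiableAt_adjointSensitivity (hF : ContDiffAt ℝ 2 F (x₀, y))
    (hinv : IsUnit (fderiv ℝ (fun x => F (x, y)) x₀)) :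
    DifferentiableAt ℝ (fun x => adjointSensitivity F x y) x₀ := by
  have hadj_fst : DifferentiableAt ℝ (fun x => adjoint (fderiv ℝ (fun x' => F (x', y)) x)) x₀ :=
    (differentiable_adjoint _).comp x₀ (differentiableAt_fderiv_fst hF)
  have hadj_snd : DifferentiableAt ℝ (fun x => adjoint (fderiv ℝ (fun y' => F (x, y')) y)) x₀ :=
    (differentiable_adjoint _).comp x₀ (differentiableAt_fderiv_snd hF)
  exact (hadj_snd.clm_comp (hadj_fst.inverse hinv.star)).neg

theorem differentiableAt_implicitGradient (hF : ContDiffAt ℝ 2 F (x₀, y))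
    (hg : ContDiffAt ℝ 2 g (x₀, y)) (hinv : IsUnit (fderiv ℝ (fun x => F (x, y)) x₀)) :
    DifferentiableAt ℝ (fun x => implicitGradient F g x y) x₀ := by
  have hgrad_fst : DifferentiableAt ℝ (fun x => gradient (fun x' => g (x', y)) x) x₀ :=
    (differentiable_toDual_symm _).comp x₀ (differentiableAt_fderiv_fst hg)
  have hgrad_snd : DifferentiableAt ℝ (fun x => gradient (fun y' => g (x, y')) y) x₀ :=
    (differentiable_toDual_symm _).comp x₀ (differentiableAt_fderiv_snd hg)
  exact hgrad_snd.add ((differentiableAt_adjointSensitivity hF hinv).clm_apply hgrad_fst)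

theorem stmt7_general (hF : ContDiffAt ℝ 2 F (x₀, y)) (hg : ContDiffAt ℝ 2 g (x₀, y))
    (hinv : IsUnit (fderiv ℝ (fun x => F (x, y)) x₀)) (hroot : F (x₀, y) = 0) :
    HasFDerivAt (fun x => implicitGradient F g (newtonStep ℝ (fun x' => F (x', y)) x) y)
      (0 : X →L[ℝ] Y) x₀ := by
  have hnewton : HasFDerivAt (newtonStep ℝ fun x => F (x, y)) (0 : X →L[ℝ] X) x₀ :=
    hasFDerivAt_newtonStep_of_root (differentiableAt_fderiv_fst hF).continuousAt hinv hroot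
  have hfix : newtonStep ℝ (fun x => F (x, y)) x₀ = x₀ := by simp [newtonStep, hroot]
  have hformula : DifferentiableAt ℝ (fun x => implicitGradient F g x y)
      (newtonStep ℝ (fun x => F (x, y)) x₀) := by
    rw [hfix]
    exact differentiableAt_implicitGradient hF hg hinv
  exact (hformula.hasFDerivAt.comp x₀ hnewton).congr_fderiv (comp_zero _)

end ImplicitGradient

/-- the Newton-like preconditioner is super-efficient. -/
theorem stmt7 (dx dy : ℕ) (hdx : 0 < dx) (hdy : 0 < dy)
    (F : E dx × E dy → E dx) (g : E dx × E dy → ℝ)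
    (hF : ContDiff ℝ (⊤ : ℕ∞) F) (hg : ContDiff ℝ (⊤ : ℕ∞) g)
    (hinv : ∀ (x : E dx) (y : E dy), IsUnit (pd1 F x y))
    (xs : E dy → E dx) (hxs : Differentiable ℝ xs)
    (hroot : ∀ y : E dy, F (xs y, y) = 0) :
    ∀ y : E dy,
      fderiv ℝ (fun x => OmegaPNewton F g x y) (xs y) = 0 ∧
      ‖fderiv ℝ (fun x => OmegaPNewton F g x y) (xs y)‖ = 0 := by
  intro y
  have h : fderiv ℝ (fun x => OmegaPNewton F g x y) (xs y) = 0 :=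
    (stmt7_general (hF.contDiffAt.of_le (by norm_cast)) (hg.contDiffAt.of_le (by norm_cast))
      (hinv (xs y) y) (hroot y)).fderiv
  exact ⟨h, by rw [h, norm_zero]⟩
end
end

section
/- (Newton-like reparameterization is super-efficient.) Assume g(x, y) = ⟨a, x⟩ + m(y) for a fixed a ∈ ℝ^{d_x} and a smooth m, that F_1(x, y) is symmetric for all (x, y), and that F(·, y) is a bijection of ℝ^{d_x} for every y. Take R(x, y) := F_1(x, y)^{−1} and Q(z, ȳ) := −F(z, ȳ), so ψ_{x̄,ȳ}(z, y) = −F_1(x̄, y)^{−1} F(z, ȳ) + x̄. Then for every y ∈ ℝ^{d_y}, the frozen-parameter map x ↦ Ω^{ψ_{x⋆(y),y}}(x, y) has vanishing derivative in x at x⋆(y): D_xΩ^{ψ_{x⋆(y),y}}(x⋆(y), y) = 0; hence the localized estimator Ω^ψ_loc is super-efficient. -/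
noncomputable section

open ContinuousLinearMap RealInnerProductSpace

variable {dx dy : ℕ}

/-- φ₁₁(z,y)[w]: Hessian in z of z ↦ ⟪w, φ(z,y)⟫. -/
def phi11 (φ : E dx × E dy → E dx) (z : E dx) (y : E dy) (w : E dx) : E dx →L[ℝ] E dx :=
  fderiv ℝ (fun z' => gradient (fun z'' => ⟪w, φ (z'', y)⟫) z') z

/-- φ₂₁(z,y)[w]: mixed second derivative of (z,y) ↦ ⟪w, φ(z,y)⟫, an element of ℝ^{dx×dy}. -/
def phi21 (φ : E dx × E dy → E dx) (z : E dx) (y : E dy) (w : E dx) : E dy →L[ℝ] E dx :=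
  fderiv ℝ (fun y' => gradient (fun z' => ⟪w, φ (z', y')⟫) z) y

/-- Uᶠ(x,y) = F₂ + F₁ φ₂(z,y) + φ₁(z,y)⁻¹ (φ₂₁(z,y)[F(x,y)]), with z = φ(·,y)⁻¹(x). -/
def Uphi (F : E dx × E dy → E dx) (φ : E dx × E dy → E dx) (φinv : E dx × E dy → E dx)
    (x : E dx) (y : E dy) : E dy →L[ℝ] E dx :=
  pd2 F x y + (pd1 F x y).comp (pd2 φ (φinv (x, y)) y) +
    (Ring.inverse (pd1 φ (φinv (x, y)) y)).comp (phi21 φ (φinv (x, y)) y (F (x, y)))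

/-- Vᶠ(x,y) = (φ₁^⊤)⁻¹ (φ₁₁(z,y)[F(x,y)]) φ₁⁻¹ + F₁(x,y), with z = φ(·,y)⁻¹(x). -/
def Vphi (F : E dx × E dy → E dx) (φ : E dx × E dy → E dx) (φinv : E dx × E dy → E dx)
    (x : E dx) (y : E dy) : E dx →L[ℝ] E dx :=
  (Ring.inverse (adjoint (pd1 φ (φinv (x, y)) y))).comp
      ((phi11 φ (φinv (x, y)) y (F (x, y))).comp (Ring.inverse (pd1 φ (φinv (x, y)) y))) +
    pd1 F x y

/-- Ψᶠ(x,y) = φ₂(z,y)^⊤ − Uᶠ(x,y)^⊤ (Vᶠ(x,y)^⊤)⁻¹. -/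
def Psiphi (F : E dx × E dy → E dx) (φ : E dx × E dy → E dx) (φinv : E dx × E dy → E dx)
    (x : E dx) (y : E dy) : E dx →L[ℝ] E dy :=
  adjoint (pd2 φ (φinv (x, y)) y) -
    (adjoint (Uphi F φ φinv x y)).comp (Ring.inverse (adjoint (Vphi F φ φinv x y)))

/-- The reparameterized formula Ωᶠ(x,y) = g₂(x,y) + Ψᶠ(x,y) g₁(x,y). -/
def Omegaphi (F : E dx × E dy → E dx) (g : E dx × E dy → ℝ)
    (φ : E dx × E dy → E dx) (φinv : E dx × E dy → E dx) (x : E dx) (y : E dy) : E dy :=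
  grad2 g x y + Psiphi F φ φinv x y (grad1 g x y)


/-- Separable localized change of variable ψ_{x̄,ȳ}(z,y) = R(x̄,y) Q(z,ȳ) + x̄. -/
def psiSep (R : E dx × E dy → (E dx →L[ℝ] E dx)) (Q : E dx × E dy → E dx)
    (xb : E dx) (yb : E dy) : E dx × E dy → E dx :=
  fun p => R (xb, p.2) (Q (p.1, yb)) + xb

/-- Inverse in z of ψ_{x̄,ȳ}(·,y): z = Q(·,ȳ)⁻¹ (R(x̄,y)⁻¹ (x − x̄)). -/
def psiSepInv (R : E dx × E dy → (E dx →L[ℝ] E dx)) (Qinv : E dx × E dy → E dx)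
    (xb : E dx) (yb : E dy) : E dx × E dy → E dx :=
  fun p => Qinv (Ring.inverse (R (xb, p.2)) (p.1 - xb), yb)

/-- The localized estimator Ωᵠ_loc(x,y) = Ω^{ψ_{x,y}}(x,y). -/
def OmegaLoc (F : E dx × E dy → E dx) (g : E dx × E dy → ℝ)
    (R : E dx × E dy → (E dx →L[ℝ] E dx)) (Q Qinv : E dx × E dy → E dx)
    (x : E dx) (y : E dy) : E dy :=
  Omegaphi F g (psiSep R Q x y) (psiSepInv R Qinv x y) x y

/-!
Let `s = x⋆(y)`. In `U` and `V` the derivatives `φ₂`, `φ₁₁`, `φ₂₁` enter through products with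
`F(z, y)` or `F(x, y)`, which vanish at `s`; hence differentiating at `s` only requires the
coefficients to be continuous, and their own derivatives never enter. There `φ₁ = -1`. As
`D_y (F₁⁻¹) = -F₁⁻¹ (D_y F₁) F₁⁻¹`, the derivative of `φ₁⁻¹ φ₂₁[F]` cancels that of `F₂`, and by
symmetry of `F₁` the derivative of `(φ₁⊤)⁻¹ φ₁₁[F] φ₁⁻¹` cancels that of `F₁`. So `V' = 0` and
`U' = F₁ φ₂'`; since `V = F₁` at `s`, the map `φ₂ - V⁻¹ U`, whose transpose is `Ψ`, has derivative
`φ₂' - F₁⁻¹ F₁ φ₂' = 0`, while `g₁` is constant and `g₂` does not depend on `x`.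
-/

open Filter Asymptotics

open scoped ContDiff Topology

section Calculus

variable {𝕜 X G H K A : Type*} [NontriviallyNormedField 𝕜]
  [NormedAddCommGroup X] [NormedSpace 𝕜 X] [NormedAddCommGroup G] [NormedSpace 𝕜 G]
  [NormedAddCommGroup H] [NormedSpace 𝕜 H] [NormedAddCommGroup K] [NormedSpace 𝕜 K]
  [NormedRing A] [HasSummableGeomSeries A] [NormedAlgebra 𝕜 A] {s : X}

lemma hasFDerivAt_clm_apply_of_eq_zero_s12 {c : X → H →L[𝕜] K} {w : X → H} {w' : X →L[𝕜] H}
    (hc : ContinuousAt c s) (hw : HasFDerivAt w w' s) (hs : w s = 0) :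
    HasFDerivAt (fun x => c x (w x)) ((c s).comp w') s := by
  have hc0 : (fun x => c x - c s) =o[𝓝 s] (1 : X → ℝ) :=
    (isLittleO_one_iff ℝ).2 (by simpa using hc.sub_const (c s))
  have hw0 : w =O[𝓝 s] fun x => x - s := by simpa only [hs, sub_zero] using hw.isBigO_sub
  have hrem : HasFDerivAt (fun x => (c x - c s) (w x)) (0 : X →L[𝕜] K) s := by
    refine .of_isLittleO ?_
    simp only [hs, map_zero, sub_zero, zero_apply]
    refine (IsBigO.of_norm_le fun x => (c x - c s).le_opNorm (w x)).trans_isLittleO ?_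
    simpa using hc0.norm_left.mul_isBigO hw0.norm_norm
  have hsum := ((c s).hasFDerivAt.comp s hw).add hrem
  rw [add_zero] at hsum
  exact hsum.congr_of_eventuallyEq (.of_forall fun x => by simp)

lemma hasFDerivAt_clm_comp_of_eq_zero {c : X → H →L[𝕜] K} {d : X → G →L[𝕜] H}
    {d' : X →L[𝕜] G →L[𝕜] H} (hc : ContinuousAt c s) (hd : HasFDerivAt d d' s) (hs : d s = 0) :
    HasFDerivAt (fun x => (c x).comp (d x)) ((compL 𝕜 G H K (c s)).comp d') s :=
  hasFDerivAt_clm_apply_of_eq_zero_s12 (c := fun x => compL 𝕜 G H K (c x))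
    ((compL 𝕜 G H K).continuous.continuousAt.comp hc) hd hs

lemma continuousAt_ringInverse_comp {Y : Type*} [TopologicalSpace Y] {c : Y → A} {y : Y}
    (hc : ContinuousAt c y) (hu : IsUnit (c y)) :
    ContinuousAt (fun x => Ring.inverse (c x)) y := by
  obtain ⟨u, hu⟩ := hu
  exact (hu ▸ NormedRing.inverse_continuousAt u).comp hc

lemma hasFDerivAt_ringInverse_comp {c : X → A} {c' : X →L[𝕜] A} (hc : HasFDerivAt c c' s)
    (hu : IsUnit (c s)) :
    HasFDerivAt (fun x => Ring.inverse (c x))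
      (-(mulLeftRight 𝕜 A (Ring.inverse (c s)) (Ring.inverse (c s))).comp c') s := by
  obtain ⟨u, hu⟩ := hu
  have h := (hu ▸ hasFDerivAt_ringInverse (𝕜 := 𝕜) u).comp s hc
  rwa [← Ring.inverse_unit, hu] at h

lemma hasFDerivAt_sub_ringInverse_comp_zero [CompleteSpace H] {P U : X → G →L[𝕜] H}
    {V : X → H →L[𝕜] H} {P' : X →L[𝕜] G →L[𝕜] H} (hP : HasFDerivAt P P' s)
    (hU : HasFDerivAt U ((compL 𝕜 G H H (V s)).comp P') s)
    (hV : HasFDerivAt V (0 : X →L[𝕜] H →L[𝕜] H) s) (hVs : IsUnit (V s)) :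
    HasFDerivAt (fun x => P x - (Ring.inverse (V x)).comp (U x)) (0 : X →L[𝕜] G →L[𝕜] H) s := by
  have hinv : HasFDerivAt (fun x => Ring.inverse (V x)) (0 : X →L[𝕜] H →L[𝕜] H) s := by
    simpa only [comp_zero, neg_zero] using hasFDerivAt_ringInverse_comp hV hVs
  have hcancel (w : H) : Ring.inverse (V s) (V s w) = w :=
    DFunLike.congr_fun (Ring.inverse_mul_cancel (V s) hVs) w
  convert! hP.sub (hinv.clm_comp hU) using 1
  ext h v
  simp [hcancel]

end Calculus

lemma ringInverse_neg_one {A : Type*} [Ring A] : Ring.inverse (-1 : A) = -1 := by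
  simpa using Ring.inverse_unit (-1 : Aˣ)

lemma hasFDerivAt_adjoint_apply_zero {𝕜 X V W : Type*} [RCLike 𝕜] [NormedAddCommGroup X]
    [NormedSpace 𝕜 X] [NormedAddCommGroup V] [InnerProductSpace 𝕜 V] [CompleteSpace V]
    [NormedAddCommGroup W] [InnerProductSpace 𝕜 W] [CompleteSpace W] {T : X → V →L[𝕜] W} {s : X}
    (hT : HasFDerivAt T (0 : X →L[𝕜] V →L[𝕜] W) s) (a : W) :
    HasFDerivAt (fun x => adjoint (T x) a) (0 : X →L[𝕜] V) s := by
  refine .of_isLittleO (IsBigO.trans_isLittleO ?_ hT.isLittleO)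
  refine .of_bound ‖a‖ (.of_forall fun x => ?_)
  simp only [zero_apply, sub_zero]
  rw [← sub_apply, ← map_sub, mul_comm, ← LinearIsometryEquiv.norm_map adjoint (T x - T s)]
  exact (adjoint (T x - T s)).le_opNorm a

lemma ringInverse_adjoint {𝕜 V : Type*} [RCLike 𝕜] [NormedAddCommGroup V] [InnerProductSpace 𝕜 V]
    [CompleteSpace V] (T : V →L[𝕜] V) : Ring.inverse (adjoint T) = adjoint (Ring.inverse T) :=
  Ring.inverse_star T

section PartialDerivatives

variable {k : ℕ} {G : E dx × E dy → E k} {x : E dx} {y : E dy}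

lemma hasFDerivAt_pd1 (hG : DifferentiableAt ℝ G (x, y)) :
    HasFDerivAt (fun x' => G (x', y)) (pd1 G x y) x :=
  (hG.comp x (hasFDerivAt_prodMk_left x y).differentiableAt).hasFDerivAt

lemma pd1_neg : pd1 (-G) x y = -pd1 G x y :=
  fderiv_fun_neg

lemma pd1_eq_fderiv_comp_inl (hG : DifferentiableAt ℝ G (x, y)) :
    pd1 G x y = (fderiv ℝ G (x, y)).comp (inl ℝ (E dx) (E dy)) :=
  (hG.hasFDerivAt.comp x (hasFDerivAt_prodMk_left x y)).fderiv

lemma pd2_eq_fderiv_comp_inr (hG : DifferentiableAt ℝ G (x, y)) :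
    pd2 G x y = (fderiv ℝ G (x, y)).comp (inr ℝ (E dx) (E dy)) :=
  (hG.hasFDerivAt.comp y (hasFDerivAt_prodMk_right x y)).fderiv

lemma contDiff_pd1 {m n : ℕ∞ω} (hG : ContDiff ℝ n G) (hmn : m + 1 ≤ n) :
    ContDiff ℝ m (fun q : E dx × E dy => pd1 G q.1 q.2) :=
  ContDiff.fderiv (f := fun (q : E dx × E dy) x' => G (x', q.2)) (by fun_prop) contDiff_fst hmn

lemma differentiable_pd1_fst (hG : ContDiff ℝ 2 G) (y : E dy) :
    Differentiable ℝ (fun x => pd1 G x y) :=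
  ((contDiff_pd1 hG one_add_one_eq_two.le).comp (contDiff_prodMk_left y)).differentiable one_ne_zero

lemma differentiable_pd2_fst (hG : ContDiff ℝ 2 G) (y : E dy) :
    Differentiable ℝ (fun x => pd2 G x y) :=
  (ContDiff.fderiv (f := fun x y' => G (x, y')) hG contDiff_const
    one_add_one_eq_two.le).differentiable one_ne_zero

lemma continuous_fderiv_pd1_fst (hG : ContDiff ℝ 2 G) (y : E dy) :
    Continuous (fderiv ℝ (fun x => pd1 G x y)) :=
  ((contDiff_pd1 hG one_add_one_eq_two.le).comp
    (contDiff_prodMk_left y)).continuous_fderiv one_ne_zero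

lemma fderiv_pd1_fst_symm (hG : ContDiff ℝ 2 G) (h k : E dx) :
    fderiv ℝ (fun x' => pd1 G x' y) x h k = fderiv ℝ (fun x' => pd1 G x' y) x k h :=
  (hG.comp (contDiff_prodMk_left y)).contDiffAt.isSymmSndFDerivAt (by simp) h k

lemma fderiv_pd2_fst_eq_fderiv_pd1_snd (hG : ContDiff ℝ 2 G) (h : E dx) (v : E dy) :
    fderiv ℝ (fun x' => pd2 G x' y) x h v = fderiv ℝ (fun y' => pd1 G x y') y v h := by
  have hdiff : Differentiable ℝ G := hG.differentiable two_ne_zero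
  have hD : HasFDerivAt (fderiv ℝ G) (fderiv ℝ (fderiv ℝ G) (x, y)) (x, y) :=
    ((hG.fderiv_right one_add_one_eq_two.le).differentiable one_ne_zero _).hasFDerivAt
  have hx : HasFDerivAt (fun x' => fderiv ℝ G (x', y)) _ x :=
    hD.comp x (hasFDerivAt_prodMk_left x y)
  have hy : HasFDerivAt (fun y' => fderiv ℝ G (x, y')) _ y :=
    hD.comp y (hasFDerivAt_prodMk_right x y)
  simp only [pd1_eq_fderiv_comp_inl (hdiff _), pd2_eq_fderiv_comp_inr (hdiff _)]
  rw [(hx.clm_comp (hasFDerivAt_const (inr ℝ (E dx) (E dy)) x)).fderiv,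
    (hy.clm_comp (hasFDerivAt_const (inl ℝ (E dx) (E dy)) y)).fderiv]
  simpa using hG.contDiffAt.isSymmSndFDerivAt (by simp) (h, 0) (0, v)

lemma differentiableAt_leftInverse_of_isUnit_pd1 {F : E dx × E dy → E dx} {f : E dx → E dx}
    (hF : ContDiffAt ℝ 1 F (x, y)) (hA : IsUnit (pd1 F x y))
    (hleft : ∀ᶠ x' in 𝓝 x, f (F (x', y)) = x') : DifferentiableAt ℝ f (F (x, y)) := by
  obtain ⟨u, hu⟩ := hA
  have hstrict : HasStrictFDerivAt (fun x' => F (x', y)) (pd1 F x y) x :=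
    (hF.comp x (contDiff_prodMk_left y).contDiffAt).hasStrictFDerivAt one_ne_zero
  rw [← hu] at hstrict
  exact (hstrict.to_local_left_inverse (f' := ContinuousLinearEquiv.unitsEquiv ℝ (E dx) u)
    hleft).differentiableAt

lemma grad1_eq_of_inner_add {g : E dx × E dy → ℝ} {a : E dx} {m : E dy → ℝ}
    (hg : ∀ x y, g (x, y) = ⟪a, x⟫ + m y) : grad1 g x y = a := by
  simp only [grad1, hg]
  exact (hasGradientAt_iff_hasFDerivAt.2 ((innerSL ℝ a).hasFDerivAt.add_const (m y))).gradient

lemma grad2_eq_of_hasGradientAt {g : E dx × E dy → ℝ} {a : E dx} {m : E dy → ℝ} {m' : E dy}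
    (hg : ∀ x y, g (x, y) = ⟪a, x⟫ + m y) (hm : HasGradientAt m m' y) : grad2 g x y = m' := by
  simp only [grad2, hg]
  exact (hasGradientAt_iff_hasFDerivAt.2 (hm.hasFDerivAt.const_add ⟪a, x⟫)).gradient

end PartialDerivatives

section SeparableChart

variable {R : E dx × E dy → (E dx →L[ℝ] E dx)} {Q : E dx × E dy → E dx} {xb z : E dx} {yb y : E dy}

lemma hasFDerivAt_psiSep_fst (hQ : DifferentiableAt ℝ Q (z, yb)) :
    HasFDerivAt (fun z' => psiSep R Q xb yb (z', y)) ((R (xb, y)).comp (pd1 Q z yb)) z :=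
  ((R (xb, y)).hasFDerivAt.comp z (hasFDerivAt_pd1 hQ)).add_const xb

lemma pd1_psiSep (hQ : DifferentiableAt ℝ Q (z, yb)) :
    pd1 (psiSep R Q xb yb) z y = (R (xb, y)).comp (pd1 Q z yb) :=
  (hasFDerivAt_psiSep_fst hQ).fderiv

lemma pd2_psiSep (hR : DifferentiableAt ℝ (fun y' => R (xb, y')) y) :
    pd2 (psiSep R Q xb yb) z y = (fderiv ℝ (fun y' => R (xb, y')) y).flip (Q (z, yb)) := by
  have h := (hR.hasFDerivAt.clm_apply (hasFDerivAt_const (Q (z, yb)) y)).add_const xb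
  refine h.fderiv.trans ?_
  simp

lemma gradient_inner_psiSep (hQ : DifferentiableAt ℝ Q (z, yb)) (w : E dx) :
    gradient (fun z' => ⟪w, psiSep R Q xb yb (z', y)⟫) z =
      adjoint (pd1 Q z yb) (adjoint (R (xb, y)) w) := by
  refine (hasGradientAt_iff_hasFDerivAt.2 ?_).gradient
  convert! (innerSL ℝ w).hasFDerivAt.comp z (hasFDerivAt_psiSep_fst (R := R) (y := y) hQ) using 1
  ext v
  simp [adjoint_inner_left]

lemma phi11_psiSep (hQ : ContDiff ℝ 2 Q) (hQsym : ∀ z', IsSelfAdjoint (pd1 Q z' yb)) (w : E dx) :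
    phi11 (psiSep R Q xb yb) z y w =
      (fderiv ℝ (fun z' => pd1 Q z' yb) z).flip (adjoint (R (xb, y)) w) := by
  simp only [phi11, gradient_inner_psiSep (hQ.differentiable two_ne_zero _), (hQsym _).adjoint_eq]
  simpa using! ((differentiable_pd1_fst hQ yb z).hasFDerivAt.clm_apply
    (hasFDerivAt_const (adjoint (R (xb, y)) w) z)).fderiv

lemma phi21_psiSep (hQ : DifferentiableAt ℝ Q (z, yb))
    (hR : DifferentiableAt ℝ (fun y' => R (xb, y')) y)
    (hRsym : ∀ y', IsSelfAdjoint (R (xb, y'))) (w : E dx) :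
    phi21 (psiSep R Q xb yb) z y w =
      (adjoint (pd1 Q z yb)).comp ((fderiv ℝ (fun y' => R (xb, y')) y).flip w) := by
  simp only [phi21, gradient_inner_psiSep hQ, (hRsym _).adjoint_eq]
  simpa using! ((adjoint (pd1 Q z yb)).hasFDerivAt.comp y
    (hR.hasFDerivAt.clm_apply (hasFDerivAt_const w y))).fderiv

end SeparableChart

section NewtonChart

variable {F : E dx × E dy → E dx} {p z : E dx → E dx} {s : E dx} {y : E dy}

/-- The scaling `R = F₁⁻¹` of the Newton-like reparameterization. -/
def newtonScaling (F : E dx × E dy → E dx) : E dx × E dy → (E dx →L[ℝ] E dx) :=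
  fun q => Ring.inverse (pd1 F q.1 q.2)

/-- The Newton-like reparameterization `z ↦ x̄ - F₁(x̄, y)⁻¹ F(z, ȳ)`. -/
def newtonChart (F : E dx × E dy → E dx) (xb : E dx) (yb : E dy) : E dx × E dy → E dx :=
  psiSep (newtonScaling F) (-F) xb yb

lemma isSelfAdjoint_newtonScaling {q : E dx × E dy} (hsym : IsSelfAdjoint (pd1 F q.1 q.2)) :
    IsSelfAdjoint (newtonScaling F q) :=
  hsym.ringInverse

lemma contDiffAt_newtonScaling (hF : ContDiff ℝ 2 F) (hA : IsUnit (pd1 F s y)) :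
    ContDiffAt ℝ 1 (newtonScaling F) (s, y) := by
  obtain ⟨u, hu⟩ := hA
  exact (hu ▸ contDiffAt_ringInverse ℝ u).comp (s, y)
    (contDiff_pd1 hF one_add_one_eq_two.le).contDiffAt

lemma eventually_differentiableAt_newtonScaling (hF : ContDiff ℝ 2 F) (hA : IsUnit (pd1 F s y)) :
    ∀ᶠ x in 𝓝 s, DifferentiableAt ℝ (fun y' => newtonScaling F (x, y')) y := by
  have h : ∀ᶠ q in 𝓝 (s, y), ContDiffAt ℝ 1 (newtonScaling F) q :=
    (contDiffAt_newtonScaling hF hA).eventually (by simp)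
  filter_upwards [(Continuous.prodMk_left y).continuousAt.eventually h] with x hx
  exact (hx.differentiableAt one_ne_zero).comp y (hasFDerivAt_prodMk_right x y).differentiableAt

lemma pd1_fderiv_newtonScaling_snd_pd1 (hF : ContDiff ℝ 2 F) (hA : IsUnit (pd1 F s y))
    (h : E dx) (v : E dy) :
    pd1 F s y (fderiv ℝ (fun y' => newtonScaling F (s, y')) y v (pd1 F s y h)) =
      -fderiv ℝ (fun x => pd2 F x y) s h v := by
  have hpd1 : DifferentiableAt ℝ (fun y' => pd1 F s y') y :=
    (contDiff_pd1 hF one_add_one_eq_two.le).differentiable one_ne_zero (s, y) |>.comp y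
      (hasFDerivAt_prodMk_right s y).differentiableAt
  have hl (w : E dx) : pd1 F s y (Ring.inverse (pd1 F s y) w) = w :=
    DFunLike.congr_fun (Ring.mul_inverse_cancel _ hA) w
  have hr (w : E dx) : Ring.inverse (pd1 F s y) (pd1 F s y w) = w :=
    DFunLike.congr_fun (Ring.inverse_mul_cancel _ hA) w
  simp only [newtonScaling]
  rw [(hasFDerivAt_ringInverse_comp hpd1.hasFDerivAt hA).fderiv,
    fderiv_pd2_fst_eq_fderiv_pd1_snd hF]
  simp [hl, hr]

lemma continuousAt_newtonScaling_comp (hF : ContDiff ℝ 2 F) (hA : IsUnit (pd1 F s y))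
    (hp : ContinuousAt p s) (hps : p s = s) :
    ContinuousAt (fun x => newtonScaling F (p x, y)) s :=
  ContinuousAt.comp (g := newtonScaling F) (f := fun x => (p x, y))
    (by simpa only [hps] using (contDiffAt_newtonScaling hF hA).continuousAt)
    (hp.prodMk continuousAt_const)

lemma continuousAt_fderiv_newtonScaling_snd_flip (hF : ContDiff ℝ 2 F) (hA : IsUnit (pd1 F s y))
    (hp : ContinuousAt p s) (hps : p s = s) :
    ContinuousAt (fun x => (fderiv ℝ (fun y' => newtonScaling F (p x, y')) y).flip) s := by
  have hD : ContinuousAt (fun x => fderiv ℝ (fun y' => newtonScaling F (x, y')) y) (p s) :=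
    hps.symm ▸ (ContDiffAt.fderiv (m := 0) (f := fun x y' => newtonScaling F (x, y'))
      (contDiffAt_newtonScaling hF hA) contDiffAt_const (zero_add 1).le).continuousAt
  exact (flipₗᵢ ℝ (E dy) (E dx) (E dx)).continuous.continuousAt.comp (hD.comp hp)

lemma pd1_newtonChart (hF : Differentiable ℝ F) (xb z : E dx) (yb y : E dy) :
    pd1 (newtonChart F xb yb) z y = -(newtonScaling F (xb, y)).comp (pd1 F z yb) := by
  rw [newtonChart, pd1_psiSep hF.neg.differentiableAt, pd1_neg, comp_neg]

lemma pd2_newtonChart {xb : E dx}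
    (hR : DifferentiableAt ℝ (fun y' => newtonScaling F (xb, y')) y) (z : E dx) (yb : E dy) :
    pd2 (newtonChart F xb yb) z y =
      -(fderiv ℝ (fun y' => newtonScaling F (xb, y')) y).flip (F (z, yb)) := by
  rw [newtonChart, pd2_psiSep hR, Pi.neg_apply, map_neg]

lemma phi11_newtonChart (hF : ContDiff ℝ 2 F) (hsym : ∀ x y, IsSelfAdjoint (pd1 F x y))
    (xb z w : E dx) (yb y : E dy) :
    phi11 (newtonChart F xb yb) z y w =
      -(fderiv ℝ (fun z' => pd1 F z' yb) z).flip (newtonScaling F (xb, y) w) := by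
  have hF' : ContDiff ℝ 2 (-F) := hF.neg
  have hsym' (z' : E dx) : IsSelfAdjoint (pd1 (-F) z' yb) := by
    simpa only [pd1_neg] using IsSelfAdjoint.neg (R := E dx →L[ℝ] E dx) (hsym z' yb)
  rw [newtonChart, phi11_psiSep hF' hsym',
    (isSelfAdjoint_newtonScaling (hsym _ _)).adjoint_eq]
  simp only [pd1_neg, fderiv_fun_neg]
  rfl

lemma phi21_newtonChart (hF : Differentiable ℝ F) (hsym : ∀ x y, IsSelfAdjoint (pd1 F x y))
    {xb : E dx} (hR : DifferentiableAt ℝ (fun y' => newtonScaling F (xb, y')) y)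
    (z w : E dx) (yb : E dy) :
    phi21 (newtonChart F xb yb) z y w =
      -(pd1 F z yb).comp ((fderiv ℝ (fun y' => newtonScaling F (xb, y')) y).flip w) := by
  rw [newtonChart, phi21_psiSep hF.neg.differentiableAt hR
    (fun _ => isSelfAdjoint_newtonScaling (hsym _ _)), pd1_neg, map_neg, (hsym _ _).adjoint_eq,
    neg_comp]

lemma pd1_newtonChart_self (hF : Differentiable ℝ F) (hA : IsUnit (pd1 F s y)) :
    pd1 (newtonChart F s y) s y = -1 := by
  rw [pd1_newtonChart hF]
  exact congrArg _ (Ring.inverse_mul_cancel _ hA)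

lemma pd2_newtonChart_self_eq_zero (hF : ContDiff ℝ 2 F) (hA : IsUnit (pd1 F s y))
    (hs : F (s, y) = 0) : pd2 (newtonChart F s y) s y = 0 := by
  rw [pd2_newtonChart (eventually_differentiableAt_newtonScaling hF hA).self_of_nhds, hs, map_zero,
    neg_zero]

lemma continuousAt_ringInverse_pd1_newtonChart (hF : ContDiff ℝ 2 F) (hA : IsUnit (pd1 F s y))
    (hp : ContinuousAt p s) (hps : p s = s) (hz : ContinuousAt z s) (hzs : z s = s) :
    ContinuousAt (fun x => Ring.inverse (pd1 (newtonChart F (p x) y) (z x) y)) s := by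
  have hdiff : Differentiable ℝ F := hF.differentiable two_ne_zero
  refine continuousAt_ringInverse_comp ?_ ?_
  · simp only [pd1_newtonChart hdiff]
    exact ((continuousAt_newtonScaling_comp hF hA hp hps).clm_comp
      ((differentiable_pd1_fst hF y).continuous.continuousAt.comp hz)).neg
  · rw [hps, hzs, pd1_newtonChart_self hdiff hA]
    exact (isUnit_one (M := E dx →L[ℝ] E dx)).neg

lemma differentiableAt_pd2_newtonChart (hF : ContDiff ℝ 2 F) (hA : IsUnit (pd1 F s y))
    (hs : F (s, y) = 0) (hp : ContinuousAt p s) (hps : p s = s) (hz : DifferentiableAt ℝ z s)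
    (hzs : z s = s) :
    DifferentiableAt ℝ (fun x => pd2 (newtonChart F (p x) y) (z x) y) s := by
  have hFz : DifferentiableAt ℝ (fun x => F (z x, y)) s :=
    (hF.differentiable two_ne_zero _).comp s (hz.prodMk (differentiableAt_const y))
  have hprod := hasFDerivAt_clm_apply_of_eq_zero_s12
    (continuousAt_fderiv_newtonScaling_snd_flip hF hA hp hps).neg hFz.hasFDerivAt
    (by rw [hzs, hs])
  refine (hprod.congr_of_eventuallyEq ?_).differentiableAt
  filter_upwards [hp.eventually (hps.symm ▸ eventually_differentiableAt_newtonScaling hF hA)]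
    with x hx
  exact pd2_newtonChart hx (z x) y

lemma hasFDerivAt_phi21_newtonChart (hF : ContDiff ℝ 2 F) (hA : IsUnit (pd1 F s y))
    (hsym : ∀ x y, IsSelfAdjoint (pd1 F x y)) (hs : F (s, y) = 0)
    (hp : ContinuousAt p s) (hps : p s = s) (hz : ContinuousAt z s) (hzs : z s = s) :
    HasFDerivAt
      (fun x => (Ring.inverse (pd1 (newtonChart F (p x) y) (z x) y)).comp
        (phi21 (newtonChart F (p x) y) (z x) y (F (x, y))))
      (-fderiv ℝ (fun x => pd2 F x y) s) s := by
  have hdiff : Differentiable ℝ F := hF.differentiable two_ne_zero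
  have hA' : ContinuousAt (fun x => pd1 F (z x) y) s :=
    (differentiable_pd1_fst hF y).continuous.continuousAt.comp hz
  have hcoeff : ContinuousAt (fun x => -(compL ℝ (E dy) (E dx) (E dx)
      ((Ring.inverse (pd1 (newtonChart F (p x) y) (z x) y)).comp (pd1 F (z x) y))).comp
        (fderiv ℝ (fun y' => newtonScaling F (p x, y')) y).flip) s :=
    (((compL ℝ (E dy) (E dx) (E dx)).continuous.continuousAt.comp
      ((continuousAt_ringInverse_pd1_newtonChart hF hA hp hps hz hzs).clm_comp hA')).clm_comp
        (continuousAt_fderiv_newtonScaling_snd_flip hF hA hp hps)).neg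
  have hprod := hasFDerivAt_clm_apply_of_eq_zero_s12 hcoeff (hasFDerivAt_pd1 (hdiff (s, y))) hs
  convert! hprod.congr_of_eventuallyEq ?_ using 1
  · ext h v
    simp [hps, hzs, pd1_newtonChart_self hdiff hA, ringInverse_neg_one,
      pd1_fderiv_newtonScaling_snd_pd1 hF hA]
  · filter_upwards [hp.eventually (hps.symm ▸ eventually_differentiableAt_newtonScaling hF hA)]
      with x hx
    rw [phi21_newtonChart hdiff hsym hx]
    ext v
    simp

lemma hasFDerivAt_phi11_newtonChart (hF : ContDiff ℝ 2 F) (hA : IsUnit (pd1 F s y))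
    (hsym : ∀ x y, IsSelfAdjoint (pd1 F x y)) (hs : F (s, y) = 0)
    (hp : ContinuousAt p s) (hps : p s = s) (hz : ContinuousAt z s) (hzs : z s = s) :
    HasFDerivAt
      (fun x => (Ring.inverse (adjoint (pd1 (newtonChart F (p x) y) (z x) y))).comp
        ((phi11 (newtonChart F (p x) y) (z x) y (F (x, y))).comp
          (Ring.inverse (pd1 (newtonChart F (p x) y) (z x) y))))
      (-fderiv ℝ (fun x => pd1 F x y) s) s := by
  have hdiff : Differentiable ℝ F := hF.differentiable two_ne_zero
  have hK := continuousAt_ringInverse_pd1_newtonChart hF hA hp hps hz hzs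
  have hD : ContinuousAt (fun x => (fderiv ℝ (fun z' => pd1 F z' y) (z x)).flip) s :=
    (flipₗᵢ ℝ (E dx) (E dx) (E dx)).continuous.continuousAt.comp
      ((continuous_fderiv_pd1_fst hF y).continuousAt.comp hz)
  have hcoeff : ContinuousAt (fun x => -(compL ℝ (E dx) (E dx) (E dx)
      (adjoint (Ring.inverse (pd1 (newtonChart F (p x) y) (z x) y)))).comp
        (((compL ℝ (E dx) (E dx) (E dx)).flip
          (Ring.inverse (pd1 (newtonChart F (p x) y) (z x) y))).comp
            ((fderiv ℝ (fun z' => pd1 F z' y) (z x)).flip.comp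
              (newtonScaling F (p x, y))))) s :=
    (((compL ℝ (E dx) (E dx) (E dx)).continuous.continuousAt.comp
      ((adjoint (𝕜 := ℝ) (E := E dx) (F := E dx)).continuous.continuousAt.comp hK)).clm_comp
        (((compL ℝ (E dx) (E dx) (E dx)).flip.continuous.continuousAt.comp hK).clm_comp
          (hD.clm_comp (continuousAt_newtonScaling_comp hF hA hp hps)))).neg
  have hprod := hasFDerivAt_clm_apply_of_eq_zero_s12 hcoeff (hasFDerivAt_pd1 (hdiff (s, y))) hs
  have hcancel (w : E dx) : newtonScaling F (s, y) (pd1 F s y w) = w :=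
    DFunLike.congr_fun (Ring.inverse_mul_cancel _ hA) w
  convert! hprod using 1
  · ext1 x
    rw [phi11_newtonChart hF hsym, ringInverse_adjoint]
    ext v
    simp
  · have hstar : adjoint (1 : E dx →L[ℝ] E dx) = 1 := star_one _
    ext h v
    simp [hps, hzs, pd1_newtonChart_self hdiff hA, ringInverse_neg_one, hcancel, hstar,
      fderiv_pd1_fst_symm hF v h]

-- `ζ x` stands for the inverse of the chart anchored at `p x`; the frozen-parameter map is the case
-- of constant `p`, and the localized estimator the case `p = id`.
lemma hasFDerivAt_Uphi_newtonChart (hF : ContDiff ℝ 2 F) (hA : IsUnit (pd1 F s y))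
    (hsym : ∀ x y, IsSelfAdjoint (pd1 F x y)) (hs : F (s, y) = 0)
    (hp : ContinuousAt p s) (hps : p s = s) {ζ : E dx → E dx × E dy → E dx}
    (hζ : DifferentiableAt ℝ (fun x => ζ x (x, y)) s) (hζs : ζ s (s, y) = s) :
    HasFDerivAt (fun x => Uphi F (newtonChart F (p x) y) (ζ x) x y)
      ((compL ℝ (E dy) (E dx) (E dx) (pd1 F s y)).comp
        (fderiv ℝ (fun x => pd2 (newtonChart F (p x) y) (ζ x (x, y)) y) s)) s := by
  have hF2 := (differentiable_pd2_fst hF y s).hasFDerivAt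
  have hφ2 := hasFDerivAt_clm_comp_of_eq_zero
    (differentiable_pd1_fst hF y).continuous.continuousAt
    (differentiableAt_pd2_newtonChart hF hA hs hp hps hζ hζs).hasFDerivAt
    (by rw [hps, hζs, pd2_newtonChart_self_eq_zero hF hA hs])
  have hφ21 := hasFDerivAt_phi21_newtonChart hF hA hsym hs hp hps hζ.continuousAt hζs
  convert! (hF2.add hφ2).add hφ21 using 1
  abel

lemma hasFDerivAt_Vphi_newtonChart (hF : ContDiff ℝ 2 F) (hA : IsUnit (pd1 F s y))
    (hsym : ∀ x y, IsSelfAdjoint (pd1 F x y)) (hs : F (s, y) = 0)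
    (hp : ContinuousAt p s) (hps : p s = s) {ζ : E dx → E dx × E dy → E dx}
    (hζ : ContinuousAt (fun x => ζ x (x, y)) s) (hζs : ζ s (s, y) = s) :
    HasFDerivAt (fun x => Vphi F (newtonChart F (p x) y) (ζ x) x y)
      (0 : E dx →L[ℝ] E dx →L[ℝ] E dx) s := by
  simpa using! (hasFDerivAt_phi11_newtonChart hF hA hsym hs hp hps hζ hζs).add
    (differentiable_pd1_fst hF y s).hasFDerivAt

lemma Vphi_eq_pd1 {φ φinv : E dx × E dy → E dx} (hs : F (s, y) = 0) :
    Vphi F φ φinv s y = pd1 F s y := by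
  have hzero : phi11 φ (φinv (s, y)) y 0 = 0 := by
    simp [phi11, gradient]
  rw [Vphi, hs, hzero, zero_comp, comp_zero, zero_add]

lemma hasFDerivAt_Psiphi_newtonChart (hF : ContDiff ℝ 2 F) (hA : IsUnit (pd1 F s y))
    (hsym : ∀ x y, IsSelfAdjoint (pd1 F x y)) (hs : F (s, y) = 0)
    (hp : ContinuousAt p s) (hps : p s = s) {ζ : E dx → E dx × E dy → E dx}
    (hζ : DifferentiableAt ℝ (fun x => ζ x (x, y)) s) (hζs : ζ s (s, y) = s) (a : E dx) :
    HasFDerivAt (fun x => Psiphi F (newtonChart F (p x) y) (ζ x) x y a)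
      (0 : E dx →L[ℝ] E dy) s := by
  have hφ2 := (differentiableAt_pd2_newtonChart hF hA hs hp hps hζ hζs).hasFDerivAt
  have hU := hasFDerivAt_Uphi_newtonChart hF hA hsym hs hp hps hζ hζs
  have hV := hasFDerivAt_Vphi_newtonChart hF hA hsym hs hp hps hζ.continuousAt hζs
  have hVs := Vphi_eq_pd1 (φ := newtonChart F (p s) y) (φinv := ζ s) hs
  rw [← hVs] at hU hA
  convert! hasFDerivAt_adjoint_apply_zero
    (hasFDerivAt_sub_ringInverse_comp_zero hφ2 hU hV hA) a using 1
  ext1 x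
  rw [Psiphi, map_sub, adjoint_comp, ringInverse_adjoint]

lemma hasFDerivAt_Omegaphi_newtonChart {g : E dx × E dy → ℝ} {a : E dx} {m : E dy → ℝ}
    (hg : ∀ x y, g (x, y) = ⟪a, x⟫ + m y) (hm : DifferentiableAt ℝ m y)
    (hF : ContDiff ℝ 2 F) (hA : IsUnit (pd1 F s y))
    (hsym : ∀ x y, IsSelfAdjoint (pd1 F x y)) (hs : F (s, y) = 0)
    (hp : ContinuousAt p s) (hps : p s = s) {ζ : E dx → E dx × E dy → E dx}
    (hζ : DifferentiableAt ℝ (fun x => ζ x (x, y)) s) (hζs : ζ s (s, y) = s) :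
    HasFDerivAt (fun x => Omegaphi F g (newtonChart F (p x) y) (ζ x) x y)
      (0 : E dx →L[ℝ] E dy) s := by
  simp only [Omegaphi, grad1_eq_of_inner_add hg, grad2_eq_of_hasGradientAt hg hm.hasGradientAt]
  exact (hasFDerivAt_Psiphi_newtonChart hF hA hsym hs hp hps hζ hζs a).const_add _

end NewtonChart

theorem stmt12_general {F : E dx × E dy → E dx} (hF : ContDiff ℝ 2 F)
    (hsym : ∀ x y, IsSelfAdjoint (pd1 F x y)) {s : E dx} {y : E dy} (hs : F (s, y) = 0)
    (hA : IsUnit (pd1 F s y)) {g : E dx × E dy → ℝ} {a : E dx} {m : E dy → ℝ}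
    (hg : ∀ x y, g (x, y) = ⟪a, x⟫ + m y) (hm : DifferentiableAt ℝ m y)
    {Finv : E dx × E dy → E dx} (hleft : ∀ᶠ x in 𝓝 s, Finv (F (x, y), y) = x)
    {R : E dx × E dy → (E dx →L[ℝ] E dx)} (hR : ∀ x y, R (x, y) = Ring.inverse (pd1 F x y))
    {Q : E dx × E dy → E dx} (hQ : ∀ q, Q q = -F q)
    {Qinv : E dx × E dy → E dx} (hQinv : ∀ q, Qinv q = Finv (-q.1, q.2)) :
    HasFDerivAt (fun x => Omegaphi F g (psiSep R Q s y) (psiSepInv R Qinv s y) x y)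
        (0 : E dx →L[ℝ] E dy) s ∧
      HasFDerivAt (fun x => OmegaLoc F g R Q Qinv x y) (0 : E dx →L[ℝ] E dy) s := by
  obtain rfl : R = newtonScaling F := funext fun q => hR q.1 q.2
  obtain rfl : Q = -F := funext hQ
  have hFinv0 : Finv (0, y) = s := hs ▸ hleft.self_of_nhds
  have hz : DifferentiableAt ℝ (fun x => psiSepInv (newtonScaling F) Qinv s y (x, y)) s := by
    simp only [psiSepInv, hQinv]
    refine DifferentiableAt.fun_comp' s (g := fun w => Finv (w, y)) ?_ (by fun_prop)
    simpa [hs] using differentiableAt_leftInverse_of_isUnit_pd1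
      (hF.of_le one_le_two).contDiffAt hA hleft
  have hzs (x : E dx) : psiSepInv (newtonScaling F) Qinv x y (x, y) = s := by
    simp [psiSepInv, hQinv, hFinv0]
  exact ⟨hasFDerivAt_Omegaphi_newtonChart hg hm hF hA hsym hs continuousAt_const rfl hz (hzs s),
    hasFDerivAt_Omegaphi_newtonChart hg hm hF hA hsym hs (p := id)
      (ζ := (psiSepInv (newtonScaling F) Qinv · y)) continuousAt_id rfl
      (by simp only [hzs]; exact differentiableAt_const s) (hzs s)⟩

/-- the Newton-like reparameterization
    (R(x,y) = F₁(x,y)⁻¹, Q(z,ȳ) = −F(z,ȳ)) is super-efficient. -/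
theorem stmt12 (dx dy : ℕ) (hdx : 0 < dx) (hdy : 0 < dy)
    (F : E dx × E dy → E dx) (g : E dx × E dy → ℝ)
    (hF : ContDiff ℝ (⊤ : ℕ∞) F) (hg : ContDiff ℝ (⊤ : ℕ∞) g)
    (hinv : ∀ (x : E dx) (y : E dy), IsUnit (pd1 F x y))
    (xs : E dy → E dx) (hxs : Differentiable ℝ xs)
    (hroot : ∀ y : E dy, F (xs y, y) = 0)
    (a : E dx) (m : E dy → ℝ) (hm : ContDiff ℝ (⊤ : ℕ∞) m)
    (hgdef : ∀ (x : E dx) (y : E dy), g (x, y) = ⟪a, x⟫ + m y)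
    (hsym : ∀ (x : E dx) (y : E dy), adjoint (pd1 F x y) = pd1 F x y)
    (hbij : ∀ y : E dy, Function.Bijective (fun x => F (x, y)))
    (Finv : E dx × E dy → E dx) (hFinv : ContDiff ℝ (⊤ : ℕ∞) Finv)
    (hleft : ∀ (x : E dx) (y : E dy), Finv (F (x, y), y) = x)
    (hright : ∀ (w : E dx) (y : E dy), F (Finv (w, y), y) = w)
    (R : E dx × E dy → (E dx →L[ℝ] E dx))
    (hR : ∀ (x : E dx) (y : E dy), R (x, y) = Ring.inverse (pd1 F x y))
    (Q : E dx × E dy → E dx) (hQ : ∀ p : E dx × E dy, Q p = -F p)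
    (Qinv : E dx × E dy → E dx) (hQinv : ∀ p : E dx × E dy, Qinv p = Finv (-p.1, p.2)) :
    ∀ y : E dy,
      fderiv ℝ (fun x =>
        Omegaphi F g (psiSep R Q (xs y) y) (psiSepInv R Qinv (xs y) y) x y) (xs y) = 0 ∧
      fderiv ℝ (fun x => OmegaLoc F g R Q Qinv x y) (xs y) = 0 := by
  exact fun y => (stmt12_general (contDiff_infty.1 hF 2) hsym (hroot y) (hinv _ _) hgdef
    (hm.differentiable (by simp) y) (.of_forall fun x => hleft x y) hR hQ hQinv).imp
      HasFDerivAt.fderiv HasFDerivAt.fderiv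
end
end
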